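/- Let $q = p^{\beta}$ with $p$ an odd prime, $\beta \geq 2$, and let $a, b$ be integers with $p \nmid ab$. If $ab$ is a quadratic residue modulo $p$ and $l$ satisfies $l^2 \equiv ab \pmod q$, then $S(a,b;q) = 2\left(\frac{l}{q}\right)\sqrt{q}\, \mathrm{Re}\!\left(\epsilon_q\, e(2l/q)\right)$, where $\epsilon_q = 1$ if $q \equiv 1 \pmod 4$ and $\epsilon_q = i$ if $q \equiv 3 \pmod 4$, $\left(\frac{\cdot}{q}\right)$ is the Jacobi symbol, and $e(t) = e^{2\pi i t}$. -/

import Mathlib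

/-- The classical Kloosterman sum `S(a,b;c)`. -/
noncomputable def kloosterman (a b : ℤ) (c : ℕ) : ℂ :=
  ∑ x ∈ Finset.range c, if Nat.gcd x c = 1 then
    Complex.exp (2 * Real.pi * Complex.I *
      ((a : ℂ) * (x : ℂ) + (b : ℂ) * ((((x : ZMod c)⁻¹).val : ℕ) : ℂ)) / (c : ℂ))
  else 0

/-- The Gaussian binomial coefficient `[m choose j]_q`, defined by the `q`-Pascal recurrence. -/
def gaussBinom {R : Type*} [CommRing R] (q : R) : ℕ → ℕ → R
  | _, 0 => 1
  | 0, _ + 1 => 0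
  | m + 1, j + 1 => gaussBinom q m j + q ^ (j + 1) * gaussBinom q m (j + 1)

namespace gaussBinom

variable {R : Type*} [CommRing R] (q : R)

@[simp]
theorem zero_right (m : ℕ) : gaussBinom q m 0 = 1 := by
  cases m <;> rfl

theorem succ_succ (m j : ℕ) : gaussBinom q (m + 1) (j + 1) =
    gaussBinom q m j + q ^ (j + 1) * gaussBinom q m (j + 1) := rfl

theorem eq_zero_of_lt {m j : ℕ} (h : m < j) : gaussBinom q m j = 0 := by
  induction m generalizing j with
  | zero => obtain ⟨j, rfl⟩ := Nat.exists_eq_succ_of_ne_zero h.ne'; rfl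
  | succ m ih =>
    obtain ⟨j, rfl⟩ := Nat.exists_eq_succ_of_ne_zero (by omega : j ≠ 0)
    rw [Nat.succ_eq_add_one, succ_succ, ih (by omega), ih (by omega)]
    simp

theorem succ_succ' {m j : ℕ} (h : j ≤ m) : gaussBinom q (m + 1) (j + 1) =
    q ^ (m - j) * gaussBinom q m j + gaussBinom q m (j + 1) := by
  induction m generalizing j with
  | zero =>
    obtain rfl : j = 0 := by omega
    simp [succ_succ, eq_zero_of_lt]
  | succ m ih =>
    rcases j with _ | j
    · have h₁ := ih (Nat.zero_le m)
      have h₂ := succ_succ q m 0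
      have h₃ := succ_succ q (m + 1) 0
      simp only [zero_right, Nat.sub_zero, zero_add, pow_one, mul_one] at h₁ h₂ h₃ ⊢
      linear_combination h₃ + q * h₁ - h₂
    · rcases (by omega : j + 1 ≤ m ∨ j = m) with hj | rfl
      · have h₁ := ih (by omega : j ≤ m)
        have h₂ := ih hj
        have h₃ := succ_succ q m j
        have h₄ := succ_succ q m (j + 1)
        rw [succ_succ]
        obtain ⟨d, rfl⟩ := Nat.exists_eq_add_of_le hj
        rw [show j + 1 + d - j = d + 1 by omega] at h₁
        rw [show j + 1 + d - (j + 1) = d by omega] at h₂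
        rw [show j + 1 + d + 1 - (j + 1) = d + 1 by omega]
        linear_combination h₁ + q ^ (j + 2) * h₂ - q ^ (d + 1) * h₃ - h₄
      · rw [succ_succ, eq_zero_of_lt q (by omega : j + 1 < j + 1 + 1)]
        simp

/-- Gauss's recurrence for the alternating sums of Gaussian binomial coefficients. -/
theorem sum_alternating_add_two (m : ℕ) :
    ∑ j ∈ Finset.range (m + 3), (-1) ^ j * gaussBinom q (m + 2) j =
      (1 - q ^ (m + 1)) * ∑ j ∈ Finset.range (m + 1), (-1) ^ j * gaussBinom q m j := by
  have hg (k : ℕ) : ∑ j ∈ Finset.range (k + 1), (-1) ^ (j + 1) * q ^ (j + 1) *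
      gaussBinom q k (j + 1) =
      (∑ j ∈ Finset.range (k + 1), (-1) ^ j * q ^ j * gaussBinom q k j) - 1 := by
    rw [eq_sub_iff_add_eq]
    have := Finset.sum_range_succ' (fun j ↦ (-1) ^ j * q ^ j * gaussBinom q k j) (k + 1)
    rw [Finset.sum_range_succ, eq_zero_of_lt q (Nat.lt_succ_self k)] at this
    simpa using this.symm
  have h₁ (k : ℕ) : ∑ j ∈ Finset.range (k + 2), (-1) ^ j * gaussBinom q (k + 1) j =
      -(∑ j ∈ Finset.range (k + 1), (-1) ^ j * gaussBinom q k j) +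
        ∑ j ∈ Finset.range (k + 1), (-1) ^ j * q ^ j * gaussBinom q k j := by
    rw [Finset.sum_range_succ', sub_eq_iff_eq_add.mp (hg k).symm, ← Finset.sum_neg_distrib,
      ← add_assoc, ← Finset.sum_add_distrib]
    congr 1
    · exact Finset.sum_congr rfl fun j _ ↦ by rw [succ_succ]; ring
    · simp
  have h₂ : ∑ j ∈ Finset.range (m + 2), (-1) ^ j * q ^ j * gaussBinom q (m + 1) j =
      -(q ^ (m + 1) * ∑ j ∈ Finset.range (m + 1), (-1) ^ j * gaussBinom q m j) +
        ∑ j ∈ Finset.range (m + 1), (-1) ^ j * q ^ j * gaussBinom q m j := by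
    rw [Finset.sum_range_succ', sub_eq_iff_eq_add.mp (hg m).symm, Finset.mul_sum,
      ← Finset.sum_neg_distrib, ← add_assoc, ← Finset.sum_add_distrib]
    congr 1
    · refine Finset.sum_congr rfl fun j hj ↦ ?_
      have hj : j ≤ m := by simpa [Nat.lt_succ_iff] using hj
      rw [succ_succ' q hj, show m + 1 = (m - j) + (j + 1) by omega, pow_add]
      ring
    · simp
  linear_combination h₁ (m + 1) + h₂ - h₁ m

theorem sum_alternating_two_mul (m : ℕ) :
    ∑ j ∈ Finset.range (2 * m + 1), (-1) ^ j * gaussBinom q (2 * m) j =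
      ∏ i ∈ Finset.range m, (1 - q ^ (2 * i + 1)) := by
  induction m with
  | zero => simp
  | succ m ih =>
    rw [Finset.prod_range_succ, ← ih, show 2 * (m + 1) = 2 * m + 2 by ring,
      sum_alternating_add_two, mul_comm]

theorem eq_of_isPrimitiveRoot {K : Type*} [Field K] {q : K} {n : ℕ}
    (hq : IsPrimitiveRoot q (n + 1)) {j : ℕ} (hj : j ≤ n) :
    q ^ (∑ i ∈ Finset.range (j + 1), i) * gaussBinom q n j = (-1) ^ j := by
  induction j with
  | zero => simp
  | succ j ih =>
    have h := succ_succ' q (by omega : j ≤ n)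
    rw [succ_succ] at h
    have h1 : 1 - q ^ (j + 1) ≠ 0 :=
      sub_ne_zero.mpr (hq.pow_ne_one_of_pos_of_lt (by omega) (by omega)).symm
    have h2 : q ^ (j + 1) * q ^ (n - j) = 1 := by
      rw [← pow_add, show j + 1 + (n - j) = n + 1 by omega, hq.pow_eq_one]
    have h3 : q ^ (j + 1) * gaussBinom q n (j + 1) = -gaussBinom q n j := by
      apply mul_left_cancel₀ h1
      linear_combination -q ^ (j + 1) * h - gaussBinom q n j * h2
    rw [Finset.sum_range_succ, pow_add, mul_assoc, h3, pow_succ, ← ih (by omega)]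
    ring

end gaussBinom

theorem ZMod.sum_range_natCast {M : Type*} [AddCommMonoid M] (n : ℕ) [NeZero n]
    (f : ZMod n → M) : ∑ j ∈ Finset.range n, f j = ∑ x, f x :=
  Finset.sum_bij' (fun j _ ↦ (j : ZMod n)) (fun x _ ↦ x.val) (fun _ _ ↦ Finset.mem_univ _)
    (fun x _ ↦ Finset.mem_range.mpr x.val_lt)
    (fun _ hj ↦ ZMod.val_cast_of_lt (Finset.mem_range.mp hj)) (fun x _ ↦ ZMod.natCast_zmod_val x)
    (fun _ _ ↦ rfl)

open ZMod in
/-- Gauss's product formula for the quadratic Gauss sum of odd modulus. -/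
theorem sum_stdAddChar_sq_eq_prod (m : ℕ) :
    ∑ x : ZMod (2 * m + 1), stdAddChar (x ^ 2) =
      ∏ i ∈ Finset.range m, (stdAddChar ((2 * i + 1 : ℕ) : ZMod (2 * m + 1)) -
        stdAddChar (-((2 * i + 1 : ℕ) : ZMod (2 * m + 1)))) := by
  set n := 2 * m + 1 with hn
  set ψ : AddChar (ZMod n) ℂ := stdAddChar with hψ
  have hn0 : (2 * m + 1 : ZMod n) = 0 := by
    have := ZMod.natCast_self n
    rw [hn] at this; push_cast at this; exact this
  have hpow (x : ZMod n) (k : ℕ) : ψ x ^ k = ψ (k * x) := by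
    rw [← nsmul_eq_mul, AddChar.map_nsmul_eq_pow]
  have hq : IsPrimitiveRoot (ψ (-2)) (2 * m + 1) := by
    rw [IsPrimitiveRoot.iff_def]
    refine ⟨?_, fun k hk ↦ ?_⟩
    · rw [hpow, ← hn, ZMod.natCast_self, zero_mul, AddChar.map_zero_eq_one]
    · rw [hpow, ← AddChar.map_zero_eq_one ψ] at hk
      have := injective_stdAddChar hk
      rw [← hn, ← ZMod.natCast_eq_zero_iff]
      linear_combination (m:ZMod n) * this + (k:ZMod n) * hn0
  have hG := gaussBinom.sum_alternating_two_mul (ψ (-2)) m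
  have hterm : ∀ j ∈ Finset.range (2 * m + 1), (-1) ^ j * gaussBinom (ψ (-2)) (2 * m) j =
      ψ (-((m : ZMod n) + 1) ^ 2) * ψ (((j : ZMod n) + (m + 1)) ^ 2) := by
    intro j hj
    have hj : j ≤ 2 * m := by simpa [Nat.lt_succ_iff] using hj
    have h := gaussBinom.eq_of_isPrimitiveRoot hq hj
    have hs : ((∑ i ∈ Finset.range (j + 1), i : ℕ) : ZMod n) * 2 = j * (j + 1) := by
      have := Finset.sum_range_id_mul_two (j + 1)
      rw [Nat.add_sub_cancel] at this
      rw [mul_comm (j : ZMod n)]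
      exact_mod_cast congrArg (Nat.cast : ℕ → ZMod n) this
    rw [hpow] at h
    have hinv (s : ZMod n) : ψ (s * 2) * ψ (s * -2) = 1 := by
      rw [← AddChar.map_add_eq_mul, ← AddChar.map_zero_eq_one ψ]
      ring_nf
    have hG : gaussBinom (ψ (-2)) (2 * m) j = ψ (j * (j + 1)) * (-1) ^ j := by
      rw [← h, ← hs, ← mul_assoc, hinv, one_mul]
    rw [hG, mul_left_comm, ← mul_pow, neg_one_mul, neg_neg, one_pow, mul_one,
      ← AddChar.map_add_eq_mul]
    congr 1
    linear_combination -(j : ZMod n) * hn0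
  rw [Finset.sum_congr rfl hterm, ← Finset.mul_sum] at hG
  have hsum : ∑ j ∈ Finset.range (2 * m + 1), ψ (((j : ZMod n) + (m + 1)) ^ 2) =
      ∑ x : ZMod n, ψ (x ^ 2) := by
    rw [← Equiv.sum_comp (Equiv.addRight ((m : ZMod n) + 1)) (fun x ↦ ψ (x ^ 2))]
    exact ZMod.sum_range_natCast n fun x ↦ ψ ((x + (m + 1)) ^ 2)
  have hprod : ∏ i ∈ Finset.range m, ψ ((2 * i + 1 : ℕ) : ZMod n) = ψ ((m : ZMod n) ^ 2) := by
    generalize m = k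
    induction k with
    | zero => simp
    | succ k ih =>
      rw [Finset.prod_range_succ, ih, ← AddChar.map_add_eq_mul]
      push_cast
      ring_nf
  have hfac (i : ℕ) : ψ ((2 * i + 1 : ℕ) : ZMod n) - ψ (-((2 * i + 1 : ℕ) : ZMod n)) =
      ψ ((2 * i + 1 : ℕ) : ZMod n) * (1 - ψ (-2) ^ (2 * i + 1)) := by
    rw [hpow, mul_sub, mul_one, ← AddChar.map_add_eq_mul]
    ring_nf
  rw [Finset.prod_congr rfl fun i _ ↦ hfac i, Finset.prod_mul_distrib, hprod, ← hG, hsum,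
    ← mul_assoc, ← AddChar.map_add_eq_mul,
    show (m : ZMod n) ^ 2 + -((m : ZMod n) + 1) ^ 2 = 0 by linear_combination -hn0,
    AddChar.map_zero_eq_one, one_mul]

/-- The sine product that evaluates the quadratic Gauss sum has `m / 2` negative factors. -/
theorem exists_pos_prod_sin_eq (m : ℕ) : ∃ r : ℝ, 0 < r ∧
    ∏ i ∈ Finset.range m, Real.sin (2 * Real.pi * (2 * i + 1 : ℕ) / (2 * m + 1 : ℕ)) =
      (-1) ^ (m / 2) * r := by
  set s : ℕ → ℝ := fun i ↦ Real.sin (2 * Real.pi * (2 * i + 1 : ℕ) / (2 * m + 1 : ℕ)) with hs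
  have hm : (0 : ℝ) < (2 * m + 1 : ℕ) := by positivity
  have hpos : ∀ i ∈ Finset.range m, i < (m + 1) / 2 → 0 < s i := fun i _ h ↦ by
    apply Real.sin_pos_of_pos_of_lt_pi
    · positivity
    · rw [div_lt_iff₀ hm]
      have : ((2 * (2 * i + 1) : ℕ) : ℝ) < (2 * m + 1 : ℕ) := by exact_mod_cast (by omega)
      push_cast at this ⊢
      nlinarith [Real.pi_pos]
  have hneg : ∀ i ∈ Finset.range m, ¬ i < (m + 1) / 2 → 0 < -s i := fun i hi h ↦ by
    rw [hs, ← Real.sin_sub_pi]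
    have hi := Finset.mem_range.mp hi
    have h₁ : ((2 * m + 1 : ℕ) : ℝ) < (2 * (2 * i + 1) : ℕ) := by exact_mod_cast (by omega)
    have h₂ : ((2 * i + 1 : ℕ) : ℝ) < (2 * m + 1 : ℕ) := by exact_mod_cast (by omega)
    push_cast at h₁ h₂ hm
    apply Real.sin_pos_of_pos_of_lt_pi
    · rw [sub_pos, lt_div_iff₀ (by positivity)]
      push_cast
      nlinarith [Real.pi_pos]
    · rw [sub_lt_iff_lt_add, div_lt_iff₀ (by positivity)]
      push_cast
      nlinarith [Real.pi_pos]
  refine ⟨∏ i ∈ Finset.range m, |s i|, Finset.prod_pos fun i hi ↦ ?_, ?_⟩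
  · by_cases h : i < (m + 1) / 2
    · exact abs_pos.mpr (hpos i hi h).ne'
    · exact abs_pos.mpr (neg_pos.mp (hneg i hi h)).ne
  · have h : ∀ i ∈ Finset.range m, s i = (if i < (m + 1) / 2 then 1 else -1) * |s i| := by
      intro i hi
      split_ifs with h
      · rw [abs_of_pos (hpos i hi h), one_mul]
      · rw [abs_of_neg (neg_pos.mp (hneg i hi h)), neg_one_mul, neg_neg]
    rw [Finset.prod_congr rfl h, Finset.prod_mul_distrib, Finset.prod_ite, Finset.prod_const_one,
      one_mul, Finset.prod_const]
    congr 2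
    rw [show (Finset.range m).filter (fun i ↦ ¬ i < (m + 1) / 2) = Finset.Ico ((m + 1) / 2) m by
      ext i; simp [and_comm], Nat.card_Ico]
    omega

open ZMod in
/-- The argument of the quadratic Gauss sum of odd modulus. -/
theorem exists_pos_sum_stdAddChar_sq_eq {n : ℕ} [NeZero n] (hn : Odd n) : ∃ r : ℝ, 0 < r ∧
    ∑ x : ZMod n, stdAddChar (x ^ 2) = (if n % 4 = 1 then 1 else Complex.I) * r := by
  obtain ⟨m, rfl⟩ := hn
  obtain ⟨r, hr, h⟩ := exists_pos_prod_sin_eq m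
  refine ⟨2 ^ m * r, by positivity, ?_⟩
  have hfac (i : ℕ) : (stdAddChar ((2 * i + 1 : ℕ) : ZMod (2 * m + 1)) : ℂ) -
      stdAddChar (-((2 * i + 1 : ℕ) : ZMod (2 * m + 1))) = (2 * Complex.I) *
        (Real.sin (2 * Real.pi * (2 * i + 1 : ℕ) / (2 * m + 1 : ℕ)) : ℝ) := by
    have h₁ := stdAddChar_coe (N := 2 * m + 1) ((2 * i + 1 : ℕ) : ℤ)
    have h₂ := stdAddChar_coe (N := 2 * m + 1) (-((2 * i + 1 : ℕ) : ℤ))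
    rw [Int.cast_neg] at h₂
    rw [Int.cast_natCast] at h₁ h₂
    rw [h₁, h₂, Complex.ofReal_sin, Complex.sin]
    field_simp
    rw [Complex.I_sq]
    push_cast
    ring_nf
  rw [sum_stdAddChar_sq_eq_prod, Finset.prod_congr rfl fun i _ ↦ hfac i, Finset.prod_mul_distrib,
    Finset.prod_const, Finset.card_range, ← Complex.ofReal_prod, h, mul_pow]
  push_cast
  rcases Nat.even_or_odd' m with ⟨k, rfl | rfl⟩
  · rw [if_pos (by omega), show 2 * k / 2 = k by omega, pow_mul Complex.I, Complex.I_sq]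
    linear_combination (2 ^ (2 * k) * r : ℂ) * (by rw [← mul_pow]; norm_num :
      (-1 : ℂ) ^ k * (-1) ^ k = 1)
  · rw [if_neg (by omega), show (2 * k + 1) / 2 = k by omega, pow_succ Complex.I, pow_mul Complex.I,
      Complex.I_sq]
    linear_combination (2 ^ (2 * k + 1) * r * Complex.I : ℂ) * (by rw [← mul_pow]; norm_num :
      (-1 : ℂ) ^ k * (-1) ^ k = 1)

open ZMod in
theorem sum_stdAddChar_mul_sq_eq_gaussSum (p : ℕ) [Fact p.Prime] (hp : p ≠ 2) {c : ZMod p}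
    (hc : c ≠ 0) : ∑ x : ZMod p, (stdAddChar (c * x ^ 2) : ℂ) =
      gaussSum ((quadraticChar (ZMod p)).ringHomComp (Int.castRingHom ℂ))
        ((stdAddChar (N := p)).mulShift c) := by
  have hchar : ringChar (ZMod p) ≠ 2 := by rwa [ZMod.ringChar_zmod_n]
  have hprim := isPrimitive_stdAddChar p
  have h0 : ∑ t : ZMod p, (stdAddChar (c * t) : ℂ) = 0 := by
    have := AddChar.sum_mulShift c hprim
    simpa [mul_comm, hc] using this
  rw [← Finset.sum_fiberwise_of_maps_to (g := fun x : ZMod p ↦ x ^ 2) (t := Finset.univ)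
    (fun _ _ ↦ Finset.mem_univ _)]
  have hfib (t : ZMod p) : ∑ x : ZMod p with x ^ 2 = t, (stdAddChar (c * x ^ 2) : ℂ) =
      (quadraticChar (ZMod p) t + 1 : ℤ) * stdAddChar (c * t) := by
    rw [← quadraticChar_card_sqrts hchar t, Finset.sum_congr rfl (g := fun _ ↦ stdAddChar (c * t))
      fun x hx ↦ by rw [(Finset.mem_filter.mp hx).2], Finset.sum_const, nsmul_eq_mul]
    congr 3
    simp
  rw [Finset.sum_congr rfl fun t _ ↦ hfib t]
  simp only [Int.cast_add, Int.cast_one, add_mul, one_mul, Finset.sum_add_distrib, h0, add_zero]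
  rfl

open ZMod in
/-- The quadratic Gauss sum of odd prime modulus. -/
theorem sum_stdAddChar_mul_sq (p : ℕ) [Fact p.Prime] (hp : p ≠ 2) {c : ZMod p} (hc : c ≠ 0) :
    ∑ x : ZMod p, (stdAddChar (c * x ^ 2) : ℂ) =
      quadraticChar (ZMod p) c * (if p % 4 = 1 then 1 else Complex.I) * Real.sqrt p := by
  have hchar : ringChar (ZMod p) ≠ 2 := by rwa [ZMod.ringChar_zmod_n]
  set χ : MulChar (ZMod p) ℂ := (quadraticChar (ZMod p)).ringHomComp (Int.castRingHom ℂ) with hχ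
  have hχ₁ : χ ≠ 1 :=
    (MulChar.ringHomComp_ne_one_iff (RingHom.injective_int _)).mpr (quadraticChar_ne_one hchar)
  have hχ₂ : χ.IsQuadratic := (quadraticChar_isQuadratic (ZMod p)).comp _
  have hg : ∑ x : ZMod p, (stdAddChar (x ^ 2) : ℂ) = gaussSum χ stdAddChar := by
    simpa [AddChar.mulShift_one] using sum_stdAddChar_mul_sq_eq_gaussSum p hp one_ne_zero
  have hsq := gaussSum_sq hχ₁ hχ₂ (isPrimitive_stdAddChar p)
  obtain ⟨r, hr, h⟩ :=
    exists_pos_sum_stdAddChar_sq_eq ((Fact.out : p.Prime).odd_of_ne_two hp)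
  have hr' : r = Real.sqrt p := by
    have hn := congrArg norm hsq
    have hε : ‖(if p % 4 = 1 then 1 else Complex.I : ℂ)‖ = 1 := by split_ifs <;> simp
    have hχ₃ : ‖χ (-1)‖ = 1 := by
      rcases hχ₂ (-1) with h | h | h
      · exact absurd h ((isUnit_one.neg.map χ).ne_zero)
      · simp [h]
      · simp [h]
    rw [← hg, h, norm_pow, norm_mul, norm_mul, ZMod.card, hε, hχ₃, one_mul, one_mul,
      Complex.norm_real, Real.norm_of_nonneg hr.le, Complex.norm_natCast] at hn
    rw [← hn, Real.sqrt_sq hr.le]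
  rw [sum_stdAddChar_mul_sq_eq_gaussSum p hp hc, ← hr', mul_assoc, ← h, hg]
  have := gaussSum_mulShift_eq χ stdAddChar (Units.mk0 c hc)
  rw [hχ₂.inv] at this
  exact this

open ZMod in
theorem kloosterman_eq_sum_units (a b : ℤ) (c : ℕ) [NeZero c] :
    kloosterman a b c = ∑ u : (ZMod c)ˣ, 
      stdAddChar ((a : ZMod c) * (u : ZMod c) + (b : ZMod c) * ((u⁻¹ : (ZMod c)ˣ) : ZMod c)) := by
  classical
  set f : ZMod c → ℂ := fun x ↦
    if IsUnit x then stdAddChar ((a : ZMod c) * x + (b : ZMod c) * x⁻¹) else 0 with hf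
  have h : kloosterman a b c = ∑ x ∈ Finset.range c, f x := by
    refine Finset.sum_congr rfl fun x _ ↦ ?_
    simp only [hf, ZMod.isUnit_iff_coprime, Nat.Coprime]
    split_ifs with hx
    · have h := stdAddChar_coe (N := c) (a * x + b * ((x : ZMod c)⁻¹).val)
      push_cast at h
      rw [ZMod.natCast_zmod_val] at h
      exact h.symm
    · rfl
  rw [h, ZMod.sum_range_natCast]
  refine (Fintype.sum_of_injective _ Units.val_injective _ _ (fun x hx ↦ if_neg hx)
    fun u ↦ ?_).symm
  rw [← ZMod.inv_coe_unit]
  exact (if_pos u.isUnit).symm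

/-- Stationary phase: only the approximate critical points `P * (u - u⁻¹) = 0` contribute. -/
theorem sum_units_addChar_eq_sum_critical {R : Type*} [CommRing R] [Fintype R] [DecidableEq R]
    {ψ : AddChar R ℂ} (hψ : ψ.IsPrimitive) (L : Rˣ) {P : R} (hP : P ^ 2 = 0) :
    ∑ u : Rˣ, ψ (L * ((u : R) + (u⁻¹ : Rˣ))) =
      ∑ u ∈ Finset.univ.filter (fun u : Rˣ ↦ P * ((u : R) - (u⁻¹ : Rˣ)) = 0),
        ψ (L * ((u : R) + (u⁻¹ : Rˣ))) := by
  have hcard : (Fintype.card R : ℂ) ≠ 0 := Nat.cast_ne_zero.mpr Fintype.card_ne_zero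
  let v : R → Rˣ := fun z ↦ ⟨1 + P * z, 1 - P * z, by linear_combination -z ^ 2 * hP,
    by linear_combination -z ^ 2 * hP⟩
  apply mul_left_cancel₀ hcard
  calc (Fintype.card R : ℂ) * ∑ u : Rˣ, ψ (L * ((u : R) + (u⁻¹ : Rˣ)))
      = ∑ z : R, ∑ u : Rˣ, ψ (L * ((u * v z : Rˣ) + ((u * v z)⁻¹ : Rˣ))) := by
        have h (z : R) := Equiv.sum_comp (Equiv.mulRight (v z)) fun u : Rˣ ↦
          ψ (L * ((u : R) + (u⁻¹ : Rˣ)))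
        simp only [Equiv.coe_mulRight] at h
        rw [Finset.sum_congr rfl fun z _ ↦ h z]
        simp
    _ = ∑ u : Rˣ, ψ (L * ((u : R) + (u⁻¹ : Rˣ))) *
          ∑ z : R, ψ (z * (L * (P * ((u : R) - (u⁻¹ : Rˣ))))) := by
        rw [Finset.sum_comm]
        refine Finset.sum_congr rfl fun u _ ↦ ?_
        rw [Finset.mul_sum]
        refine Finset.sum_congr rfl fun z _ ↦ ?_
        rw [← AddChar.map_add_eq_mul, mul_inv]
        congr 1
        simp only [Units.val_mul, v, Units.inv_mk]
        ring
    _ = _ := by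
        rw [Finset.mul_sum, Finset.sum_filter]
        refine Finset.sum_congr rfl fun u _ ↦ ?_
        rw [AddChar.sum_mulShift _ hψ]
        simp only [Units.mul_right_eq_zero]
        split_ifs
        · ring
        · simp

/-- A sum over units with parameters `A`, `b` depends only on a square root `L` of `A * b`. -/
theorem sum_units_addChar_change_variable {R : Type*} [CommRing R] [Fintype R] [DecidableEq R]
    (ψ : AddChar R ℂ) (A L : Rˣ) {b : R} (h : (L : R) ^ 2 = A * b) :
    ∑ u : Rˣ, ψ (A * u + b * (u⁻¹ : Rˣ)) = ∑ u : Rˣ, ψ (L * ((u : R) + (u⁻¹ : Rˣ))) := by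
  rw [← Equiv.sum_comp (Equiv.mulRight (L * A⁻¹))]
  refine Finset.sum_congr rfl fun u _ ↦ ?_
  have hA : (A : R) * (A⁻¹ : Rˣ) = 1 := A.mul_inv
  have hL : (L : R) * (L⁻¹ : Rˣ) = 1 := L.mul_inv
  congr 1
  simp only [Equiv.coe_mulRight, mul_inv, inv_inv, Units.val_mul]
  linear_combination (L * u : R) * hA - ((u⁻¹ : Rˣ) : R) * (L⁻¹ : Rˣ) * h +
    (L * (u⁻¹ : Rˣ) : R) * hL

theorem ZMod.isUnit_intCast_of_not_dvd {p : ℕ} (hp : p.Prime) (β : ℕ) {z : ℤ}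
    (hz : ¬ (p : ℤ) ∣ z) : IsUnit (z : ZMod (p ^ β)) := by
  rw [ZMod.coe_int_isUnit_iff_isCoprime, Nat.cast_pow]
  exact (((Nat.prime_iff_prime_int.mp hp).coprime_iff_not_dvd).mpr hz).pow_left

theorem ZMod.mul_sub_inv_eq_zero_iff {p β : ℕ} (hp : p.Prime) (hp2 : p ≠ 2) (P : ZMod (p ^ β))
    (u : (ZMod (p ^ β))ˣ) :
    P * ((u : ZMod (p ^ β)) - (u⁻¹ : (ZMod (p ^ β))ˣ)) = 0 ↔
      P * (u - 1) = 0 ∨ P * (u + 1) = 0 := by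
  have hu : (u : ZMod (p ^ β)) * (u⁻¹ : (ZMod (p ^ β))ˣ) = 1 := u.mul_inv
  constructor
  · intro h
    have h' : P * ((u - 1) * (u + 1)) = 0 := by
      linear_combination (u : ZMod (p ^ β)) * h + P * hu
    have hunit : IsUnit ((u : ZMod (p ^ β)) - 1) ∨ IsUnit ((u : ZMod (p ^ β)) + 1) := by
      obtain ⟨z, hz⟩ := ZMod.intCast_surjective (u : ZMod (p ^ β))
      rw [← hz]
      by_contra! hcon
      have h₁ : (p : ℤ) ∣ z - 1 := by
        by_contra h
        exact hcon.1 (by exact_mod_cast ZMod.isUnit_intCast_of_not_dvd hp β h)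
      have h₂ : (p : ℤ) ∣ z + 1 := by
        by_contra h
        exact hcon.2 (by exact_mod_cast ZMod.isUnit_intCast_of_not_dvd hp β h)
      have h₃ : (p : ℤ) ∣ (2 : ℕ) := by
        rw [show ((2 : ℕ) : ℤ) = (z + 1) - (z - 1) by push_cast; ring]
        exact dvd_sub h₂ h₁
      exact hp2 ((Nat.prime_dvd_prime_iff_eq hp Nat.prime_two).mp (Int.natCast_dvd_natCast.mp h₃))
    rcases hunit with hv | hv
    · right
      rw [← hv.mul_right_eq_zero]
      linear_combination h'
    · left
      rw [← hv.mul_right_eq_zero]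
      linear_combination h'
  · rintro (h | h)
    · linear_combination ((u⁻¹ : (ZMod (p ^ β))ˣ) : ZMod (p ^ β)) * (u + 1) * h -
        P * u * hu
    · linear_combination ((u⁻¹ : (ZMod (p ^ β))ˣ) : ZMod (p ^ β)) * (u - 1) * h -
        P * u * hu

theorem ZMod.sum_range_mul_natCast {M : Type*} [AddCommMonoid M] (n m : ℕ) [NeZero n]
    (f : ZMod n → M) : ∑ j ∈ Finset.range (n * m), f j = m • ∑ x, f x := by
  induction m with
  | zero => simp
  | succ m ih =>
    rw [mul_add, mul_one, Finset.sum_range_add, ih, succ_nsmul, ← ZMod.sum_range_natCast]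
    simp


theorem two_mul_pow_ne_zero {p β k : ℕ} (hp : p.Prime) (hp2 : p ≠ 2) (hk : 0 < k) (hkβ : k ≤ β) :
    (2 * p ^ (β - k) : ZMod (p ^ β)) ≠ 0 := by
  intro h
  have h₁ : ((2 * p ^ (β - k) : ℕ) : ZMod (p ^ β)) = 0 := by exact_mod_cast h
  rw [ZMod.natCast_eq_zero_iff] at h₁
  have h₂ : p ^ (β - k) * p ∣ p ^ (β - k) * 2 := by
    rw [← pow_succ, mul_comm _ 2]
    exact (pow_dvd_pow p (by omega)).trans h₁
  have h₃ := Nat.dvd_of_mul_dvd_mul_left (pow_pos hp.pos _) h₂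
  exact hp2 ((Nat.prime_dvd_prime_iff_eq hp Nat.prime_two).mp h₃)

open ComplexConjugate in
theorem sum_units_addChar_eq_add_conj {p β k : ℕ} [NeZero (p ^ β)] (hp : p.Prime) (hp2 : p ≠ 2)
    {ψ : AddChar (ZMod (p ^ β)) ℂ} (hψ : ψ.IsPrimitive) (hk : 0 < k) (hkβ : 2 * k ≤ β)
    (L : (ZMod (p ^ β))ˣ) :
    ∑ u : (ZMod (p ^ β))ˣ, ψ (L * ((u : ZMod (p ^ β)) + (u⁻¹ : (ZMod (p ^ β))ˣ))) =
      (∑ u ∈ Finset.univ.filter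
        (fun u : (ZMod (p ^ β))ˣ ↦ (p ^ (β - k) : ZMod (p ^ β)) * (u - 1) = 0),
        ψ (L * ((u : ZMod (p ^ β)) + (u⁻¹ : (ZMod (p ^ β))ˣ)))) +
      conj (∑ u ∈ Finset.univ.filter
        (fun u : (ZMod (p ^ β))ˣ ↦ (p ^ (β - k) : ZMod (p ^ β)) * (u - 1) = 0),
        ψ (L * ((u : ZMod (p ^ β)) + (u⁻¹ : (ZMod (p ^ β))ˣ)))) := by
  have hP : (p ^ (β - k) : ZMod (p ^ β)) ^ 2 = 0 := by
    rw [← pow_mul]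
    exact_mod_cast (ZMod.natCast_eq_zero_iff _ _).mpr (pow_dvd_pow p (by omega))
  rw [sum_units_addChar_eq_sum_critical hψ L hP]
  simp only [ZMod.mul_sub_inv_eq_zero_iff hp hp2]
  rw [Finset.filter_or, Finset.sum_union]
  · congr 1
    rw [map_sum]
    refine Finset.sum_bij' (fun u _ ↦ -u) (fun u _ ↦ -u) ?_ ?_ ?_ ?_ ?_
    · intro u hu
      simp only [Finset.mem_filter, Finset.mem_univ, true_and, Units.val_neg] at hu ⊢
      linear_combination -hu
    · intro u hu
      simp only [Finset.mem_filter, Finset.mem_univ, true_and, Units.val_neg] at hu ⊢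
      linear_combination -hu
    · simp
    · simp
    · intro u _
      rw [← AddChar.map_neg_eq_conj, inv_neg, Units.val_neg, Units.val_neg]
      congr 1
      ring
  · rw [Finset.disjoint_filter]
    intro u _ h₁ h₂
    exact two_mul_pow_ne_zero hp hp2 hk (by omega : k ≤ β) (by linear_combination h₂ - h₁)

/-- Near the critical point `1` the phase is quadratic. -/
theorem sum_units_near_one_eq {p β k : ℕ} [NeZero (p ^ β)] (hp : p.Prime)
    (hk : 0 < k) (hkβ : k ≤ β) (hβk : β ≤ 3 * k) (ψ : AddChar (ZMod (p ^ β)) ℂ) (L : ZMod (p ^ β)) :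
    ∑ u ∈ Finset.univ.filter
        (fun u : (ZMod (p ^ β))ˣ ↦ (p ^ (β - k) : ZMod (p ^ β)) * (u - 1) = 0),
        ψ (L * ((u : ZMod (p ^ β)) + (u⁻¹ : (ZMod (p ^ β))ˣ))) =
      ∑ y ∈ Finset.range (p ^ (β - k)),
        ψ (2 * L) * ψ (L * ((p : ZMod (p ^ β)) ^ (2 * k) * (y : ZMod (p ^ β)) ^ 2)) := by
  have hcop (y : ℕ) : Nat.Coprime (1 + p ^ k * y) (p ^ β) := by
    refine Nat.Coprime.pow_right _ (Nat.Coprime.symm ((Nat.Prime.coprime_iff_not_dvd hp).mpr ?_))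
    rw [← Nat.dvd_add_iff_left (dvd_mul_of_dvd_left (dvd_pow_self p hk.ne') y)]
    exact hp.one_lt.ne' ∘ Nat.dvd_one.mp
  have hsplit : p ^ β = p ^ (β - k) * p ^ k := by rw [← pow_add, Nat.sub_add_cancel hkβ]
  have hzero : (p ^ (β - k) * p ^ k : ZMod (p ^ β)) = 0 := by
    exact_mod_cast (ZMod.natCast_eq_zero_iff _ _).mpr hsplit.dvd
  have hcube : (p ^ k : ZMod (p ^ β)) ^ 3 = 0 := by
    rw [← pow_mul]
    exact_mod_cast (ZMod.natCast_eq_zero_iff _ _).mpr (pow_dvd_pow p (by omega))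
  symm
  refine Finset.sum_bij (fun y _ ↦ ZMod.unitOfCoprime _ (hcop y)) ?_ ?_ ?_ ?_
  · intro y _
    simp only [Finset.mem_filter, Finset.mem_univ, true_and, ZMod.coe_unitOfCoprime]
    push_cast
    linear_combination (y : ZMod (p ^ β)) * hzero
  · intro y₁ h₁ y₂ h₂ h
    have h := congrArg Units.val h
    rw [ZMod.coe_unitOfCoprime, ZMod.coe_unitOfCoprime, ZMod.natCast_eq_natCast_iff, hsplit,
      mul_comm (p ^ (β - k)) (p ^ k)] at h
    have h := Nat.ModEq.mul_left_cancel' (pow_pos hp.pos k).ne' (Nat.ModEq.add_left_cancel' 1 h)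
    exact h.eq_of_lt_of_lt (Finset.mem_range.mp h₁) (Finset.mem_range.mp h₂)
  · intro u hu
    simp only [Finset.mem_filter, Finset.mem_univ, true_and] at hu
    set w : ZMod (p ^ β) := u - 1 with hw
    have hdvd : p ^ (β - k) * p ^ k ∣ p ^ (β - k) * w.val := by
      rw [← hsplit, ← ZMod.natCast_eq_zero_iff]
      push_cast
      rwa [ZMod.natCast_zmod_val]
    obtain ⟨y, hy⟩ := Nat.dvd_of_mul_dvd_mul_left (pow_pos hp.pos _) hdvd
    refine ⟨y, ?_, ?_⟩
    · have := w.val_lt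
      rw [hy, hsplit, mul_comm] at this
      exact Finset.mem_range.mpr (Nat.lt_of_mul_lt_mul_right this)
    · ext
      rw [ZMod.coe_unitOfCoprime, ← hy, Nat.cast_add, ZMod.natCast_zmod_val, hw]
      simp
  · intro y _
    rw [← AddChar.map_add_eq_mul]
    congr 1
    set u := ZMod.unitOfCoprime _ (hcop y) with hu
    have hinv : (u : ZMod (p ^ β)) * (u⁻¹ : (ZMod (p ^ β))ˣ) = 1 := u.mul_inv
    have huv : (u : ZMod (p ^ β)) = 1 + p ^ k * y := by
      rw [hu, ZMod.coe_unitOfCoprime]; push_cast; rfl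
    rw [← u.isUnit.mul_left_inj]
    generalize ((u⁻¹ : (ZMod (p ^ β))ˣ) : ZMod (p ^ β)) = v at hinv
    rw [huv] at hinv ⊢
    rw [mul_comm 2 k, pow_mul]
    linear_combination -L * hinv + L * y ^ 3 * hcube

theorem stmt7 (p : ℕ) (hp : p.Prime) (hodd : Odd p) (β : ℕ) (hβ : 2 ≤ β)
    (a b l : ℤ) (hab : ¬ ((p : ℤ) ∣ a * b))
    (hqr : IsSquare ((a * b : ℤ) : ZMod p))
    (hl : l ^ 2 ≡ a * b [ZMOD (p ^ β : ℕ)]) :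
    kloosterman a b (p ^ β) =
      (2 * (jacobiSym l (p ^ β) : ℝ) * Real.sqrt (p ^ β : ℕ) *
        (((if (p ^ β) % 4 = 1 then (1 : ℂ) else Complex.I) *
          Complex.exp (2 * Real.pi * Complex.I * (2 * (l : ℂ)) / ((p ^ β : ℕ) : ℂ))).re) : ℝ) := by
  have hp2 : p ≠ 2 := by rintro rfl; exact absurd hodd (by decide)
  have : Fact p.Prime := ⟨hp⟩
  have : NeZero (p ^ β) := ⟨pow_ne_zero _ hp.ne_zero⟩
  have ha : ¬ (p : ℤ) ∣ a := fun h ↦ hab (dvd_mul_of_dvd_left h b)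
  have hpl : ¬ (p : ℤ) ∣ l := fun h ↦ hab <| by
    have h₁ : (p : ℤ) ∣ ((p ^ β : ℕ) : ℤ) := by
      exact_mod_cast dvd_pow_self p (by omega : β ≠ 0)
    exact (hl.of_dvd h₁).dvd_iff.mp (dvd_pow h two_ne_zero)
  obtain ⟨A, hA⟩ := ZMod.isUnit_intCast_of_not_dvd hp β ha
  obtain ⟨L, hL⟩ := ZMod.isUnit_intCast_of_not_dvd hp β hpl
  have hLA : (L : ZMod (p ^ β)) ^ 2 = A * (b : ZMod (p ^ β)) := by
    rw [hL, hA]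
    exact_mod_cast (ZMod.intCast_eq_intCast_iff _ _ _).mpr hl
  have hlp : (l : ZMod p) ≠ 0 := by rwa [Ne, ZMod.intCast_zmod_eq_zero_iff_dvd]
  have hexp : (ZMod.stdAddChar (2 * (L : ZMod (p ^ β))) : ℂ) =
      Complex.exp (2 * Real.pi * Complex.I * (2 * (l : ℂ)) / ((p ^ β : ℕ) : ℂ)) := by
    have := ZMod.stdAddChar_coe (N := p ^ β) (2 * l)
    rw [hL]
    push_cast at this ⊢
    exact this
  have hmod (j : ℕ) : p ^ (2 * j) ≡ 1 [MOD 4] := by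
    have h : p ^ 2 ≡ 1 [MOD 4] := by
      rcases Nat.odd_mod_four_iff.mp (Nat.odd_iff.mp hodd) with h | h <;>
        simp [Nat.ModEq, Nat.pow_mod, h]
    simpa [pow_mul] using h.pow j
  obtain ⟨k, hk⟩ : ∃ k, k = β / 2 := ⟨_, rfl⟩
  rw [kloosterman_eq_sum_units, ← hA, sum_units_addChar_change_variable _ A L hLA,
    sum_units_addChar_eq_add_conj hp hp2 (ZMod.isPrimitive_stdAddChar _) (k := k) (by omega)
      (by omega),
    sum_units_near_one_eq hp (by omega) (by omega) (by omega), ← Finset.mul_sum, hexp,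
    Complex.add_conj]
  congr 1
  rw [mul_assoc (2 : ℝ), mul_assoc (2 : ℝ)]
  refine congrArg ((2 : ℝ) * ·) ?_
  rw [← Complex.re_ofReal_mul]
  congr 1
  rw [jacobiSym.pow_right, ← jacobiSym.legendreSym.to_jacobiSym]
  rcases Nat.even_or_odd' β with ⟨j, rfl | rfl⟩
  · obtain rfl : k = j := by omega
    have hz : (p : ZMod (p ^ (2 * k))) ^ (2 * k) = 0 := by
      exact_mod_cast ZMod.natCast_self (p ^ (2 * k))
    have hJ : legendreSym p l ^ (2 * k) = 1 := by
      rw [pow_mul, legendreSym.sq_one p hlp, one_pow]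
    have hsqrt : Real.sqrt ((p ^ (2 * k) : ℕ) : ℝ) = p ^ k := by
      rw [Nat.cast_pow, mul_comm, pow_mul, Real.sqrt_sq (by positivity)]
    rw [hJ, hsqrt, if_pos (show p ^ (2 * k) % 4 = 1 from hmod k), hz]
    simp only [zero_mul, mul_zero, AddChar.map_zero_eq_one, Finset.sum_const, Finset.card_range,
      show 2 * k - k = k by omega, nsmul_eq_mul]
    push_cast
    ring
  · obtain rfl : k = j := by omega
    have hsum : ∑ y ∈ Finset.range (p ^ (2 * k + 1 - k)),
        (ZMod.stdAddChar (L * (p ^ (2 * k) * y ^ 2) : ZMod (p ^ (2 * k + 1))) : ℂ) =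
        p ^ k * ∑ x : ZMod p, ZMod.stdAddChar ((l : ZMod p) * x ^ 2) := by
      have hterm (y : ℕ) :
          (ZMod.stdAddChar (L * (p ^ (2 * k) * y ^ 2) : ZMod (p ^ (2 * k + 1))) : ℂ) =
          ZMod.stdAddChar ((l : ZMod p) * (y : ZMod p) ^ 2) := by
        have h₁ := ZMod.stdAddChar_coe (N := p ^ (2 * k + 1)) (l * (p ^ (2 * k) * y ^ 2))
        have h₂ := ZMod.stdAddChar_coe (N := p) (l * y ^ 2)
        have hp0 : (p : ℂ) ≠ 0 := Nat.cast_ne_zero.mpr hp.ne_zero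
        push_cast at h₁ h₂
        rw [hL, h₁, h₂]
        congr 1
        field_simp
        ring
      rw [Finset.sum_congr rfl fun y _ ↦ hterm y, show 2 * k + 1 - k = k + 1 by omega, pow_succ',
        ZMod.sum_range_mul_natCast p (p ^ k) fun x ↦ (ZMod.stdAddChar ((l : ZMod p) * x ^ 2) : ℂ),
        nsmul_eq_mul, Nat.cast_pow]
    have hmod' : p ^ (2 * k + 1) % 4 = p % 4 := by
      rw [pow_succ, (hmod k).mul_right p, one_mul]
    have hJ : legendreSym p l ^ (2 * k + 1) = legendreSym p l := by
      rw [pow_succ, pow_mul, legendreSym.sq_one p hlp, one_pow, one_mul]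
    have hsqrt : Real.sqrt ((p ^ (2 * k + 1) : ℕ) : ℝ) = p ^ k * Real.sqrt p := by
      rw [Nat.cast_pow, pow_succ, mul_comm 2, pow_mul, Real.sqrt_mul (by positivity),
        Real.sqrt_sq (by positivity)]
    rw [hmod']
    rw [hsum, sum_stdAddChar_mul_sq p hp2 hlp, hJ, hsqrt, legendreSym]
    push_cast
    ring
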